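/- For every n ≥ 1, the unitary group U(n) := {M ∈ GL_n(ℂ) : M* M = 1} (M* the conjugate transpose) is strongly acceptable: for every group Γ (not necessarily finite) and homomorphisms φ, φ' : Γ → U(n) such that φ(γ) and φ'(γ) are conjugate in U(n) for every γ ∈ Γ, there exists u ∈ U(n) with φ'(γ) = u φ(γ) u⁻¹ for all γ ∈ Γ. -/

import Mathlib

open Matrix

noncomputable section

/-- Membership in the unitary group `U(n) = {M ∈ GL_n(ℂ) : M* M = 1}`, where `M*` is the
conjugate transpose. -/
def memU (n : ℕ) (g : Matrix (Fin n) (Fin n) ℂ) : Prop :=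
  gᴴ * g = 1

/-!
Conjugate matrices have equal traces, so `φ` and `φ'` have equal characters. Unitary
representations are semisimple, because orthogonal complements of invariant subspaces are invariant,
and semisimple representations in characteristic zero are determined by their characters: if there
were no nonzero homomorphism `M → N`, then by Jacobson density some ring element would act as `1`
on `M` and as `0` on `N`, and its traces would give `dim M = 0`; otherwise the image of a nonzero
homomorphism is a common summand, which one splits off before inducting on the dimension.

Hence some invertible `T` intertwines `φ` and `φ'`. By unitarity, `Tᴴ * T` commutes with every
`φ γ`, hence so does its square root `|T|`, and the unitary part `T * |T|⁻¹` of the polar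
decomposition still intertwines `φ` and `φ'`.
-/

section SemisimpleModule

variable {k R M N : Type*} [Ring R] [AddCommGroup M] [Module R M] [AddCommGroup N] [Module R N]

theorem linearMap_eq_zero_of_forall_linearMap_eq_zero [IsSemisimpleModule R M]
    [IsSemisimpleModule R N] (h : ∀ f : M →ₗ[R] N, f = 0) (g : N →ₗ[R] M) : g = 0 := by
  -- A section of `g` over its range extends to a homomorphism `M → N`, which vanishes.
  obtain ⟨s, hs⟩ := IsSemisimpleModule.lifting_property g.rangeRestrict g.surjective_rangeRestrict
    LinearMap.id
  obtain ⟨f, hf⟩ := IsSemisimpleModule.extension_property g.range.subtype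
    g.range.injective_subtype s
  have hs0 : s = 0 := by rw [← hf, h f, LinearMap.zero_comp]
  ext n
  have hn : g (s (g.rangeRestrict n)) = g n := congr(($hs (g.rangeRestrict n)).1)
  rw [← hn, hs0, LinearMap.zero_apply, map_zero, LinearMap.zero_apply]

theorem isSemisimpleModule_prod [IsSemisimpleModule R M] [IsSemisimpleModule R N] :
    IsSemisimpleModule R (M × N) := by
  rw [← Submodule.topEquiv.isSemisimpleModule_iff_of_bijective (LinearEquiv.bijective _),
    ← LinearMap.sup_range_inl_inr]
  exact .sup (.range _) (.range _)

theorem nonempty_linearEquiv_ker_prod_range [IsSemisimpleModule R M] (f : M →ₗ[R] N) :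
    Nonempty (M ≃ₗ[R] f.ker × f.range) := by
  obtain ⟨C, hC⟩ := exists_isCompl f.ker
  let e : C ≃ₗ[R] f.range :=
    (Submodule.quotientEquivOfIsCompl _ _ hC).symm.trans f.quotKerEquivRange
  exact ⟨(Submodule.prodEquivOfIsCompl _ _ hC).symm.trans ((LinearEquiv.refl R _).prodCongr e)⟩

variable [Field k] [Algebra k R] [Module k M] [IsScalarTower k R M]
  [Module k N] [IsScalarTower k R N]

variable (k M N) in
theorem exists_smul_eq_self_and_smul_eq_zero [IsSemisimpleModule R M] [IsSemisimpleModule R N]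
    [Module.Finite k M] [Module.Finite k N] (h : ∀ f : M →ₗ[R] N, f = 0) :
    ∃ r : R, (∀ m : M, r • m = m) ∧ ∀ n : N, r • n = 0 := by
  have h' := linearMap_eq_zero_of_forall_linearMap_eq_zero h
  let p : Module.End R (M × N) := .inl R M N ∘ₗ .fst R M N
  have comm (f : Module.End R (M × N)) (x : M × N) : p (f x) = f (p x) := by
    have hMN (m : M) : (f (m, 0)).2 = 0 :=
      LinearMap.congr_fun (h (.snd R M N ∘ₗ f ∘ₗ .inl R M N)) m
    have hNM (n : N) : (f (0, n)).1 = 0 :=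
      LinearMap.congr_fun (h' (.fst R M N ∘ₗ f ∘ₗ .inr R M N)) n
    have hx : f x = f (x.1, 0) + f (0, x.2) := by simp [← map_add]
    ext <;> simp [p, hx, hMN, hNM]
  let P : Module.End (Module.End R (M × N)) (M × N) :=
    { toFun := p, map_add' := map_add p, map_smul' := comm }
  have : Module.Finite (Module.End R (M × N)) (M × N) := .of_restrictScalars_finite k _ _
  have : IsSemisimpleModule R (M × N) := isSemisimpleModule_prod
  obtain ⟨r, hr⟩ := Module.Finite.toModuleEnd_moduleEnd_surjective (R := R) (M := M × N) P
  have hr' (x : M × N) : r • x = (x.1, 0) := LinearMap.congr_fun hr x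
  exact ⟨r, fun m ↦ congr($(hr' (m, 0)).1), fun n ↦ congr($(hr' (0, n)).2)⟩

variable (k R M) in
/-- The character of an `R`-module `M` over a `k`-algebra `R`: the trace over `k` of the action of
the elements of `R`. -/
def moduleCharacter : R →ₗ[k] k :=
  LinearMap.trace k M ∘ₗ (Algebra.lsmul k k M).toLinearMap

theorem moduleCharacter_apply (r : R) :
    moduleCharacter k R M r = LinearMap.trace k M (Algebra.lsmul k k M r) := rfl

theorem moduleCharacter_one [Module.Finite k M] :
    moduleCharacter k R M 1 = Module.finrank k M := by
  rw [moduleCharacter_apply, map_one, LinearMap.trace_one]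

theorem moduleCharacter_congr (e : M ≃ₗ[R] N) : moduleCharacter k R M = moduleCharacter k R N := by
  ext r
  rw [moduleCharacter_apply, moduleCharacter_apply,
    ← LinearMap.trace_conj' _ (e.restrictScalars k)]
  congr 1
  ext n
  simp [LinearEquiv.conj_apply]

theorem moduleCharacter_prod [Module.Finite k M] [Module.Finite k N] :
    moduleCharacter k R (M × N) = moduleCharacter k R M + moduleCharacter k R N :=
  LinearMap.ext fun r ↦
    LinearMap.trace_prodMap' (Algebra.lsmul k k M r) (Algebra.lsmul k k N r)

theorem exists_linearMap_ne_zero_of_moduleCharacter_eq [CharZero k]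
    [IsSemisimpleModule R M] [IsSemisimpleModule R N] [Module.Finite k M] [Module.Finite k N]
    [Nontrivial M] (h : moduleCharacter k R M = moduleCharacter k R N) :
    ∃ f : M →ₗ[R] N, f ≠ 0 := by
  by_contra! hzero
  obtain ⟨r, hrM, hrN⟩ := exists_smul_eq_self_and_smul_eq_zero k M N hzero
  have hM : moduleCharacter k R M r = Module.finrank k M := by
    have : Algebra.lsmul k k M r = 1 := LinearMap.ext hrM
    rw [moduleCharacter_apply, this, LinearMap.trace_one]
  have hN : moduleCharacter k R N r = 0 := by
    have : Algebra.lsmul k k N r = 0 := LinearMap.ext hrN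
    rw [moduleCharacter_apply, this, map_zero]
  rw [h, hN, eq_comm, Nat.cast_eq_zero] at hM
  exact Module.finrank_pos.ne' hM

theorem nonempty_linearEquiv_of_moduleCharacter_eq [CharZero k]
    [IsSemisimpleModule R M] [IsSemisimpleModule R N] [Module.Finite k M] [Module.Finite k N]
    (h : moduleCharacter k R M = moduleCharacter k R N) : Nonempty (M ≃ₗ[R] N) := by
  induction hd : Module.finrank k M using Nat.strong_induction_on generalizing M N with
  | _ d ih =>
  cases subsingleton_or_nontrivial M with
  | inl hM =>
    have hN : (Module.finrank k N : k) = 0 := by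
      rw [← moduleCharacter_one (R := R), ← h, moduleCharacter_one,
        Module.finrank_zero_of_subsingleton, Nat.cast_zero]
    have : Subsingleton N := Module.finrank_zero_iff.mp (Nat.cast_eq_zero.mp hN)
    exact ⟨0⟩
  | inr hM =>
    obtain ⟨f, hf⟩ := exists_linearMap_ne_zero_of_moduleCharacter_eq h
    obtain ⟨eM⟩ := nonempty_linearEquiv_ker_prod_range f
    obtain ⟨D, hD⟩ := exists_isCompl f.range
    let eN := Submodule.prodEquivOfIsCompl _ _ hD.symm
    have : Module.Finite k f.ker := inferInstanceAs (Module.Finite k (f.ker.restrictScalars k))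
    have : Module.Finite k f.range := inferInstanceAs (Module.Finite k (f.range.restrictScalars k))
    have : Module.Finite k D := inferInstanceAs (Module.Finite k (D.restrictScalars k))
    have hchar : moduleCharacter k R f.ker = moduleCharacter k R D := by
      rw [moduleCharacter_congr eM, ← moduleCharacter_congr eN, moduleCharacter_prod,
        moduleCharacter_prod] at h
      exact add_right_cancel h
    have hlt : Module.finrank k f.ker < d := by
      have hne : f.ker.restrictScalars k ≠ ⊤ := by simpa [LinearMap.ker_eq_top] using hf
      exact hd ▸ Submodule.finrank_lt hne
    obtain ⟨e⟩ := ih _ hlt hchar rfl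
    exact ⟨eM.trans ((e.prodCongr (.refl R _)).trans eN)⟩

end SemisimpleModule

section Representation

variable {k G V W : Type*} [Field k] [Monoid G]
  [AddCommGroup V] [Module k V] [AddCommGroup W] [Module k W]

theorem moduleCharacter_asModule_single (ρ : Representation k G V) (g : G) :
    moduleCharacter k (MonoidAlgebra k G) ρ.asModule (.single g 1) = ρ.character g := by
  rw [moduleCharacter_apply, ← LinearMap.trace_conj' _ ρ.asModuleEquiv]
  congr 1
  ext v
  rw [LinearEquiv.conj_apply_apply, Algebra.lsmul_coe, ρ.asModuleEquiv_map_smul,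
    LinearEquiv.apply_symm_apply, ρ.asAlgebraHom_single_one]

theorem nonempty_equiv_of_character_eq [CharZero k] [FiniteDimensional k V]
    [FiniteDimensional k W] {ρ : Representation k G V} {σ : Representation k G W}
    (hρ : ρ.IsSemisimpleRepresentation) (hσ : σ.IsSemisimpleRepresentation)
    (h : ρ.character = σ.character) : Nonempty (ρ.Equiv σ) := by
  rw [Representation.isSemisimpleRepresentation_iff_isSemisimpleModule_asModule] at hρ hσ
  have hmod : moduleCharacter k (MonoidAlgebra k G) ρ.asModule =
      moduleCharacter k (MonoidAlgebra k G) σ.asModule := by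
    ext g
    simpa [moduleCharacter_asModule_single] using congr_fun h g
  obtain ⟨e⟩ := nonempty_linearEquiv_of_moduleCharacter_eq hmod
  exact ⟨.mk (ρ.asModuleEquiv.symm.trans ((e.restrictScalars k).trans σ.asModuleEquiv)) fun g ↦
    ((Representation.IntertwiningMap.equivLinearMapAsModule ρ σ).symm
      e.toLinearMap).isIntertwining' g⟩

end Representation

section Unitary

variable {𝕜 Γ V : Type*} [RCLike 𝕜] [Monoid Γ] [NormedAddCommGroup V] [InnerProductSpace 𝕜 V]

theorem apply_mem_orthogonal_of_forall_apply_mem (T : V →ₗᵢ[𝕜] V) {U : Submodule 𝕜 V}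
    [FiniteDimensional 𝕜 U] (hU : ∀ x ∈ U, T x ∈ U) {v : V} (hv : v ∈ Uᗮ) : T v ∈ Uᗮ := by
  have hmap : U.map T.toLinearMap = U :=
    Submodule.eq_of_le_of_finrank_eq (Submodule.map_le_iff_le_comap.mpr hU)
      (Submodule.equivMapOfInjective T.toLinearMap T.injective U).finrank_eq.symm
  rw [Submodule.mem_orthogonal] at hv ⊢
  intro x hx
  obtain ⟨y, hy, rfl⟩ := hmap.ge hx
  exact (T.inner_map_map y v).trans (hv y hy)

theorem isSemisimpleRepresentation_of_norm_map [FiniteDimensional 𝕜 V]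
    {ρ : Representation 𝕜 Γ V} (hρ : ∀ γ v, ‖ρ γ v‖ = ‖v‖) : ρ.IsSemisimpleRepresentation where
  exists_isCompl U := by
    let U' : Subrepresentation ρ := ⟨U.toSubmoduleᗮ, fun γ _ hv ↦
      apply_mem_orthogonal_of_forall_apply_mem ⟨ρ γ, hρ γ⟩ (U.apply_mem_toSubmodule γ) hv⟩
    have h : IsCompl U.toSubmodule U'.toSubmodule := U.toSubmodule.isCompl_orthogonal
    exact ⟨U', disjoint_iff.mpr <| Subrepresentation.toSubmodule_injective h.inf_eq_bot,
      codisjoint_iff.mpr <| Subrepresentation.toSubmodule_injective h.sup_eq_top⟩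

end Unitary

section Polar

variable {A : Type*} [Ring A] [StarRing A] [TopologicalSpace A] [IsTopologicalRing A] [T2Space A]
  [Algebra ℝ A] [ContinuousFunctionalCalculus ℝ A IsSelfAdjoint]
  [PartialOrder A] [StarOrderedRing A] [NonnegSpectrumClass ℝ A]

theorem exists_mem_unitary_forall_semiconjBy {a : A} (ha : IsUnit a) :
    ∃ u ∈ unitary A, ∀ b c : A, SemiconjBy a b c → SemiconjBy a (star b) (star c) →
      SemiconjBy u b c := by
  obtain ⟨s, hs⟩ : IsUnit (CFC.abs a) := by
    rw [← isUnit_mul_self_iff, CFC.abs_mul_abs]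
    exact ha.star.mul ha
  have hs_inv : star (↑s⁻¹ : A) = ↑s⁻¹ := by
    have hs_sa : star (s : A) = s := by rw [hs, (CFC.abs_nonneg a).isSelfAdjoint.star_eq]
    have hs_sa' : IsSelfAdjoint s := Units.ext hs_sa
    exact congrArg Units.val hs_sa'.inv
  have hs_mul : (s : A) * s = star a * a := hs ▸ CFC.abs_mul_abs a
  refine ⟨a * ↑s⁻¹, (ha.mul s⁻¹.isUnit).mem_unitary_of_star_mul_self ?_, fun b c hbc hbc' ↦ ?_⟩
  · calc star (a * ↑s⁻¹) * (a * ↑s⁻¹) = ↑s⁻¹ * (star a * a) * ↑s⁻¹ := by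
          simp only [star_mul, hs_inv, mul_assoc]
      _ = 1 := by simp [← hs_mul, ← mul_assoc]
  · have hcb : SemiconjBy (star a) c b := by simpa only [star_star] using hbc'.star_star_star
    have hcomm : Commute (star a * a) b := hcb.mul_left hbc
    have hsb : Commute (s : A) b := hs ▸ hcomm.cfcₙ_nnreal _
    exact hbc.mul_left hsb.units_inv_left

end Polar

theorem semiconjBy_star_of_mem_unitary {A : Type*} [Monoid A] [StarMul A] {a b c : A}
    (hb : b ∈ unitary A) (hc : c ∈ unitary A) (h : SemiconjBy a b c) :
    SemiconjBy a (star b) (star c) :=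
  SemiconjBy.units_inv_right (x := Unitary.toUnits ⟨b, hb⟩) (y := Unitary.toUnits ⟨c, hc⟩) h

section UnitaryMatrix

variable {𝕜 ι Γ : Type*} [RCLike 𝕜] [Fintype ι] [DecidableEq ι] [Monoid Γ]

theorem norm_toLpLin_of_mem_unitaryGroup {A : Matrix ι ι 𝕜} (hA : A ∈ unitaryGroup ι 𝕜)
    (v : EuclideanSpace 𝕜 ι) : ‖toLpLin 2 2 A v‖ = ‖v‖ :=
  ContinuousLinearMap.norm_map_of_mem_unitary
    (Unitary.map_mem (toEuclideanCLM (n := ι) (𝕜 := 𝕜)) hA) v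

theorem trace_toLpLin {R : Type*} [CommRing R] (p : ENNReal) (A : Matrix ι ι R) :
    LinearMap.trace R (WithLp p (ι → R)) (toLpLin p p A) = A.trace := by
  rw [toLpLin_eq_toLin, trace_toLin_eq]

/-- A matrix-valued homomorphism, viewed as a representation on Euclidean space so that unitary
matrices act by isometries. -/
def euclideanRepresentation (φ : Γ →* Matrix ι ι 𝕜) :
    Representation 𝕜 Γ (EuclideanSpace 𝕜 ι) :=
  (toLpLinAlgEquiv 2 : Matrix ι ι 𝕜 ≃ₐ[𝕜] _).toMonoidHom.comp φ

theorem character_euclideanRepresentation (φ : Γ →* Matrix ι ι 𝕜) (γ : Γ) :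
    (euclideanRepresentation φ).character γ = (φ γ).trace :=
  trace_toLpLin 2 (φ γ)

theorem isSemisimpleRepresentation_euclideanRepresentation {φ : Γ →* Matrix ι ι 𝕜}
    (hφ : ∀ γ, φ γ ∈ unitaryGroup ι 𝕜) :
    (euclideanRepresentation φ).IsSemisimpleRepresentation :=
  isSemisimpleRepresentation_of_norm_map fun γ ↦ norm_toLpLin_of_mem_unitaryGroup (hφ γ)

theorem exists_isUnit_forall_semiconjBy_of_equiv {φ φ' : Γ →* Matrix ι ι 𝕜}
    (e : (euclideanRepresentation φ).Equiv (euclideanRepresentation φ')) :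
    ∃ T : Matrix ι ι 𝕜, IsUnit T ∧ ∀ γ, SemiconjBy T (φ γ) (φ' γ) := by
  let toMatrix := (toLpLinAlgEquiv 2 : Matrix ι ι 𝕜 ≃ₐ[𝕜] _).symm
  refine ⟨toMatrix e.toLinearMap, ?_, fun γ ↦ ?_⟩
  · have he : IsUnit (e.toLinearMap : Module.End 𝕜 (EuclideanSpace 𝕜 ι)) :=
      (Module.End.isUnit_iff _).mpr e.toLinearEquiv.bijective
    exact he.map toMatrix
  · have he : SemiconjBy (e.toLinearMap : Module.End 𝕜 (EuclideanSpace 𝕜 ι))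
        (toLpLinAlgEquiv 2 (φ γ)) (toLpLinAlgEquiv 2 (φ' γ)) := e.isIntertwining' γ
    simpa [toMatrix] using he.map toMatrix

open scoped MatrixOrder in
theorem statement14_general {φ φ' : Γ →* Matrix ι ι 𝕜} (hφ : ∀ γ, φ γ ∈ unitaryGroup ι 𝕜)
    (hφ' : ∀ γ, φ' γ ∈ unitaryGroup ι 𝕜) (htrace : ∀ γ, (φ γ).trace = (φ' γ).trace) :
    ∃ u ∈ unitaryGroup ι 𝕜, ∀ γ, φ' γ = u * φ γ * u⁻¹ := by
  have hchar : (euclideanRepresentation φ).character = (euclideanRepresentation φ').character := by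
    ext γ
    rw [character_euclideanRepresentation, character_euclideanRepresentation, htrace]
  obtain ⟨e⟩ := nonempty_equiv_of_character_eq
    (isSemisimpleRepresentation_euclideanRepresentation hφ)
    (isSemisimpleRepresentation_euclideanRepresentation hφ') hchar
  obtain ⟨T, hT, hTφ⟩ := exists_isUnit_forall_semiconjBy_of_equiv e
  obtain ⟨u, hu, hu_comm⟩ := exists_mem_unitary_forall_semiconjBy hT
  refine ⟨u, hu, fun γ ↦ ?_⟩
  have hγ : SemiconjBy u (φ γ) (φ' γ) :=
    hu_comm _ _ (hTφ γ) (semiconjBy_star_of_mem_unitary (hφ γ) (hφ' γ) (hTφ γ))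
  rw [hγ.eq, mul_nonsing_inv_cancel_right u _ (UnitaryGroup.det_isUnit ⟨u, hu⟩)]

theorem memU_iff_mem_unitaryGroup {n : ℕ} {g : Matrix (Fin n) (Fin n) ℂ} :
    memU n g ↔ g ∈ unitaryGroup (Fin n) ℂ :=
  mem_unitaryGroup_iff'.symm

end UnitaryMatrix

/-- For every `n ≥ 1`, the unitary group `U(n)` is strongly acceptable: any two pointwise
(locally) conjugate homomorphisms from an arbitrary group into `U(n)` are globally
conjugate.  (Group homomorphisms into `U(n)` are encoded as monoid homomorphisms into the
multiplicative monoid of matrices landing in `U(n)`.) -/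
theorem statement14 (n : ℕ) (hn : 1 ≤ n) (Γ : Type) [Group Γ]
    (φ φ' : Γ →* Matrix (Fin n) (Fin n) ℂ)
    (hφ : ∀ γ, memU n (φ γ)) (hφ' : ∀ γ, memU n (φ' γ))
    (hloc : ∀ γ : Γ, ∃ u : Matrix (Fin n) (Fin n) ℂ,
      memU n u ∧ φ' γ = u * φ γ * u⁻¹) :
    ∃ u : Matrix (Fin n) (Fin n) ℂ, memU n u ∧ ∀ γ : Γ, φ' γ = u * φ γ * u⁻¹ := by
  simp only [memU_iff_mem_unitaryGroup] at *
  refine statement14_general hφ hφ' fun γ ↦ ?_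
  obtain ⟨u, hu, hγ⟩ := hloc γ
  rw [hγ, trace_mul_comm, ← mul_assoc, nonsing_inv_mul u (UnitaryGroup.det_isUnit ⟨u, hu⟩),
    one_mul]

end
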